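/- arXiv:1201.6403 — 5 statements merged into one kernel-verified Lean document; each statement's English description precedes it below -/
import Mathlib

section
/- Let n ≥ 1 and d ≥ 1 be integers and let a_1, …, a_n ≥ 1 be integers with gcd(d, a_1, …, a_n) = 1. Consider the ℂ-algebra homomorphism ℂ[x_1, …, x_n, y] → ℂ[u_1, …, u_n] determined by x_i ↦ u_i^d (for i = 1, …, n) and y ↦ u_1^{a_1}·u_2^{a_2}⋯u_n^{a_n}. Then the kernel of this homomorphism is exactly the principal ideal generated by y^d − x_1^{a_1}⋯x_n^{a_n}. In particular, ℂ[x_1, …, x_n, y]/(y^d − x_1^{a_1}⋯x_n^{a_n}) is isomorphic to the subalgebra of ℂ[u_1, …, u_n] generated by u_1^d, …, u_n^d and u_1^{a_1}⋯u_n^{a_n}. -/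
open MvPolynomial

/-- The algebra map of the theorem. -/
noncomputable def phiMap (n d : ℕ) (a : Fin n → ℕ) :
    MvPolynomial (Fin (n + 1)) ℂ →ₐ[ℂ] MvPolynomial (Fin n) ℂ :=
  MvPolynomial.aeval
        (fun i : Fin (n + 1) => Fin.lastCases
          (∏ j : Fin n, (X j : MvPolynomial (Fin n) ℂ) ^ a j)
          (fun j : Fin n => (X j : MvPolynomial (Fin n) ℂ) ^ d) i)

/-- The generator of the kernel. -/
noncomputable def relPoly (n d : ℕ) (a : Fin n → ℕ) : MvPolynomial (Fin (n + 1)) ℂ :=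
  (X (Fin.last n) : MvPolynomial (Fin (n + 1)) ℂ) ^ d - ∏ i : Fin n, X i.castSucc ^ a i

/-- The map on exponents. -/
noncomputable def expMap (n d : ℕ) (a : Fin n → ℕ) (e : Fin (n + 1) →₀ ℕ) : Fin n →₀ ℕ :=
  Finsupp.equivFunOnFinite.symm (fun i => d * e i.castSucc + a i * e (Fin.last n))

/-- The reduced exponent. -/
noncomputable def redExp (n d : ℕ) (a : Fin n → ℕ) (e : Fin (n + 1) →₀ ℕ) : Fin (n + 1) →₀ ℕ :=
  Finsupp.equivFunOnFinite.symm (fun i => Fin.lastCases (motive := fun _ => ℕ) (e (Fin.last n) % d)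
    (fun j => e j.castSucc + a j * (e (Fin.last n) / d)) i)

lemma monomial_eq_prod {m : ℕ} (e : Fin m →₀ ℕ) (c : ℂ) :
    monomial e c = C c * ∏ i, (X i : MvPolynomial (Fin m) ℂ) ^ e i := by
  rw [monomial_eq, Finsupp.prod_fintype]
  simp

lemma phiMap_monomial (n d : ℕ) (a : Fin n → ℕ) (e : Fin (n + 1) →₀ ℕ) (c : ℂ) :
    phiMap n d a (monomial e c) = monomial (expMap n d a e) c := by
  rw [monomial_eq_prod, monomial_eq_prod, Fin.prod_univ_castSucc]
  simp only [phiMap, map_mul, map_prod, map_pow, aeval_X, Fin.lastCases_castSucc,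
    Fin.lastCases_last, algHom_C, expMap, Finsupp.equivFunOnFinite_symm_apply_apply]
  rw [← Finset.prod_pow, ← Finset.prod_mul_distrib]
  simp only [← pow_mul, ← pow_add]
  rfl

lemma red_mem (n d : ℕ) (a : Fin n → ℕ) (e : Fin (n + 1) →₀ ℕ) (c : ℂ) :
    monomial e c - monomial (redExp n d a e) c ∈ Ideal.span {relPoly n d a} := by
  rw [← Ideal.Quotient.eq]
  have h : Ideal.Quotient.mk (Ideal.span {relPoly n d a}) (X (Fin.last n)) ^ d =
      ∏ i : Fin n, Ideal.Quotient.mk (Ideal.span {relPoly n d a}) (X i.castSucc) ^ a i := by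
    have := (Ideal.Quotient.eq (I := Ideal.span {relPoly n d a})).2
      (Ideal.mem_span_singleton_self (relPoly n d a))
    simpa using this
  rw [monomial_eq_prod, monomial_eq_prod, Fin.prod_univ_castSucc, Fin.prod_univ_castSucc]
  simp only [redExp, map_mul, map_prod, map_pow, Finsupp.equivFunOnFinite_symm_apply_apply,
    Fin.lastCases_castSucc, Fin.lastCases_last]
  conv_lhs => rw [← Nat.div_add_mod (e (Fin.last n)) d, pow_add, pow_mul, h]
  simp only [pow_add, pow_mul, Finset.prod_mul_distrib, Finset.prod_pow]
  ring

lemma exists_red (n d : ℕ) (hd : 1 ≤ d) (a : Fin n → ℕ) (f : MvPolynomial (Fin (n + 1)) ℂ) :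
    ∃ g : MvPolynomial (Fin (n + 1)) ℂ, f - g ∈ Ideal.span {relPoly n d a} ∧
      ∀ e ∈ g.support, e (Fin.last n) < d := by
  classical
  induction f using MvPolynomial.induction_on' with
  | monomial e c =>
    refine ⟨_, red_mem n d a e c, fun e' he' => ?_⟩
    have := support_monomial_subset he'
    rw [Finset.mem_singleton] at this
    subst this
    simpa [redExp] using Nat.mod_lt _ hd
  | add p q hp hq =>
    obtain ⟨g, hg, hg'⟩ := hp
    obtain ⟨k, hk, hk'⟩ := hq
    refine ⟨g + k, ?_, fun e he => ?_⟩
    · have := Ideal.add_mem _ hg hk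
      convert this using 1
      ring
    · rcases Finset.mem_union.1 (support_add he) with h | h
      · exact hg' e h
      · exact hk' e h

lemma expMap_inj (n d : ℕ) (hd : 1 ≤ d) (a : Fin n → ℕ)
    (hgcd : Nat.gcd d (Finset.univ.gcd a) = 1) (e e' : Fin (n + 1) →₀ ℕ)
    (he : e (Fin.last n) < d) (he' : e' (Fin.last n) < d)
    (h : expMap n d a e = expMap n d a e') : e = e' := by
  have h1 : ∀ i : Fin n, d * e i.castSucc + a i * e (Fin.last n) =
      d * e' i.castSucc + a i * e' (Fin.last n) := fun i => by
    simpa [expMap] using DFunLike.congr_fun h i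
  have key : ∀ x y : ℕ, x ≤ y → y < d → (∀ i : Fin n, d ∣ a i * (y - x)) → x = y := by
    intro x y hxy hy hdvd
    have h2 : d ∣ Finset.univ.gcd a * (y - x) := by
      have : d ∣ Finset.univ.gcd (fun i => a i * (y - x)) :=
        Finset.dvd_gcd (fun i _ => hdvd i)
      rw [Finset.gcd_mul_right] at this
      simpa using this
    have h3 : d ∣ y - x := Nat.Coprime.dvd_of_dvd_mul_left hgcd h2
    have := Nat.eq_zero_of_dvd_of_lt h3 (by omega)
    omega
  have hl : e (Fin.last n) = e' (Fin.last n) := by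
    have hz : ∀ i : Fin n, (d : ℤ) ∣ a i * ((e' (Fin.last n) : ℤ) - e (Fin.last n)) := fun i =>
      ⟨(e i.castSucc : ℤ) - e' i.castSucc, by
        have := h1 i
        zify at this
        linarith⟩
    rcases le_total (e (Fin.last n)) (e' (Fin.last n)) with hle | hle
    · refine key _ _ hle he' fun i => ?_
      zify [hle]
      exact hz i
    · refine (key _ _ hle he fun i => ?_).symm
      zify [hle]
      have := (dvd_neg).2 (hz i)
      rwa [← mul_neg, neg_sub] at this
  ext i
  refine Fin.lastCases hl (fun j => ?_) i
  have := h1 j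
  rw [hl] at this
  exact Nat.eq_of_mul_eq_mul_left hd (Nat.add_right_cancel this)

lemma phiMap_red (n d : ℕ) (hd : 1 ≤ d) (a : Fin n → ℕ)
    (hgcd : Nat.gcd d (Finset.univ.gcd a) = 1) (g : MvPolynomial (Fin (n + 1)) ℂ)
    (hg : ∀ e ∈ g.support, e (Fin.last n) < d) (h0 : phiMap n d a g = 0) : g = 0 := by
  classical
  by_contra hne
  obtain ⟨e, he⟩ := support_nonempty.2 hne
  have h1 : coeff (expMap n d a e) (phiMap n d a g) = coeff e g := by
    conv_lhs => rw [g.as_sum, map_sum]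
    simp only [phiMap_monomial, coeff_sum, coeff_monomial]
    rw [Finset.sum_eq_single e]
    · simp
    · intro b hb hbe
      rw [if_neg]
      intro hh
      exact hbe (expMap_inj n d hd a hgcd _ _ (hg b hb) (hg e he) hh)
    · intro h
      exact absurd he h
  rw [h0, coeff_zero] at h1
  exact mem_support_iff.1 he h1.symm

lemma phiMap_rel (n d : ℕ) (a : Fin n → ℕ) : phiMap n d a (relPoly n d a) = 0 := by
  simp only [phiMap, relPoly, map_sub, map_prod, map_pow, aeval_X, Fin.lastCases_castSucc,
    Fin.lastCases_last]
  rw [← Finset.prod_pow, sub_eq_zero]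
  exact Finset.prod_congr rfl fun i _ => by rw [← pow_mul, ← pow_mul, mul_comm]

lemma ker_phiMap (n d : ℕ) (hd : 1 ≤ d) (a : Fin n → ℕ)
    (hgcd : Nat.gcd d (Finset.univ.gcd a) = 1) :
    RingHom.ker (phiMap n d a) = Ideal.span {relPoly n d a} := by
  have hle : Ideal.span {relPoly n d a} ≤ RingHom.ker (phiMap n d a) := by
    rw [Ideal.span_singleton_le_iff_mem, RingHom.mem_ker]
    exact phiMap_rel n d a
  refine le_antisymm (fun f hf => ?_) hle
  obtain ⟨g, hg, hg'⟩ := exists_red n d hd a f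
  have h1 := hle hg
  rw [RingHom.mem_ker] at hf h1
  rw [map_sub, hf, zero_sub, neg_eq_zero] at h1
  rw [phiMap_red n d hd a hgcd g hg' h1, sub_zero] at hg
  exact hg

lemma range_phiMap (n d : ℕ) (a : Fin n → ℕ) :
    (phiMap n d a).range = Algebra.adjoin ℂ
        ((Set.range fun j : Fin n => (X j : MvPolynomial (Fin n) ℂ) ^ d) ∪
          {∏ j : Fin n, (X j : MvPolynomial (Fin n) ℂ) ^ a j}) := by
  rw [phiMap, ← Algebra.adjoin_range_eq_range_aeval]
  congr 1
  ext p
  simp only [Set.mem_range, Set.mem_union, Set.mem_singleton_iff]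
  constructor
  · rintro ⟨i, rfl⟩
    refine Fin.lastCases ?_ (fun j => ?_) i
    · right
      simp
    · left
      exact ⟨j, by simp⟩
  · rintro (⟨j, rfl⟩ | rfl)
    · exact ⟨j.castSucc, by simp⟩
    · exact ⟨Fin.last n, by simp⟩

/-- For `n ≥ 1`, `d ≥ 1` and `a₁, …, aₙ ≥ 1` with
`gcd(d, a₁, …, aₙ) = 1`, the kernel of the `ℂ`-algebra map
`ℂ[x₁, …, xₙ, y] → ℂ[u₁, …, uₙ]`, `xᵢ ↦ uᵢ^d`, `y ↦ u₁^{a₁} ⋯ uₙ^{aₙ}`, is the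
principal ideal generated by `y^d - x₁^{a₁} ⋯ xₙ^{aₙ}`; in particular the
quotient by this ideal is isomorphic to the subalgebra of `ℂ[u₁, …, uₙ]`
generated by `u₁^d, …, uₙ^d` and `u₁^{a₁} ⋯ uₙ^{aₙ}`. -/
theorem stmt_1 (n d : ℕ) (hn : 1 ≤ n) (hd : 1 ≤ d) (a : Fin n → ℕ)
    (ha : ∀ i, 1 ≤ a i) (hgcd : Nat.gcd d (Finset.univ.gcd a) = 1) :
    RingHom.ker (MvPolynomial.aeval
        (fun i : Fin (n + 1) => Fin.lastCases
          (∏ j : Fin n, (X j : MvPolynomial (Fin n) ℂ) ^ a j)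
          (fun j : Fin n => (X j : MvPolynomial (Fin n) ℂ) ^ d) i) :
        MvPolynomial (Fin (n + 1)) ℂ →ₐ[ℂ] MvPolynomial (Fin n) ℂ) =
      Ideal.span {(X (Fin.last n) : MvPolynomial (Fin (n + 1)) ℂ) ^ d -
        ∏ i : Fin n, X i.castSucc ^ a i} ∧
    Nonempty ((MvPolynomial (Fin (n + 1)) ℂ ⧸
        Ideal.span {(X (Fin.last n) : MvPolynomial (Fin (n + 1)) ℂ) ^ d -
          ∏ i : Fin n, X i.castSucc ^ a i}) ≃ₐ[ℂ]
      Algebra.adjoin ℂ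
        ((Set.range fun j : Fin n => (X j : MvPolynomial (Fin n) ℂ) ^ d) ∪
          {∏ j : Fin n, (X j : MvPolynomial (Fin n) ℂ) ^ a j})) := by
  have hk := ker_phiMap n d hd a hgcd
  refine ⟨hk, ⟨?_⟩⟩
  exact (Ideal.quotientEquivAlgOfEq ℂ hk.symm).trans
    ((Ideal.quotientKerAlgEquivOfSurjective (phiMap n d a).rangeRestrict_surjective |>
      (Ideal.quotientEquivAlgOfEq ℂ (by
        ext x
        simp [RingHom.mem_ker, Subtype.ext_iff])).trans).trans
      (Subalgebra.equivOfEq _ _ (range_phiMap n d a)))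
end

section
/- Let n ≥ 1 and d ≥ 1 be integers. The quotient ring R = ℂ[x_1, …, x_n, y]/(y^d − x_1·x_2⋯x_n) is an integral domain which is integrally closed in its field of fractions (i.e. R is a normal domain). -/
open MvPolynomial

theorem normal_of_retract {R B : Type*} [CommRing R] [CommRing B] [IsDomain B]
    [IsIntegrallyClosed B] (φ : R →+* B) (ρ : B → R) (h1 : ρ 1 = 1)
    (hρ : ∀ r b, ρ (φ r * b) = r * ρ b) : IsDomain R ∧ IsIntegrallyClosed R := by
  have hinj : Function.Injective φ := by
    intro a b hab
    have ha := hρ a 1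
    have hb := hρ b 1
    rw [h1, mul_one, mul_one] at ha hb
    rw [← ha, ← hb, hab]
  have hdom : IsDomain R := hinj.isDomain φ
  refine ⟨hdom, ?_⟩
  rw [isIntegrallyClosed_iff (FractionRing R)]
  intro x hx
  let ψ : FractionRing R →+* FractionRing B := IsFractionRing.map (j := φ) hinj
  have hψ : ∀ r, ψ (algebraMap R _ r) = algebraMap B (FractionRing B) (φ r) := fun r =>
    IsLocalization.map_eq _ r
  have hInt : IsIntegral B (ψ x) := by
    obtain ⟨p, hp, hpx⟩ := hx
    refine ⟨p.map φ, hp.map φ, ?_⟩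
    rw [Polynomial.eval₂_map]
    have hc : (algebraMap B (FractionRing B)).comp φ = ψ.comp (algebraMap R _) := by
      ext r; simp [hψ]
    rw [hc, ← Polynomial.hom_eval₂, hpx, map_zero]
  obtain ⟨c, hc⟩ := IsIntegrallyClosed.isIntegral_iff.mp hInt
  obtain ⟨a, b, hb, rfl⟩ := IsFractionRing.div_surjective (A := R) x
  have hb0 : b ≠ 0 := nonZeroDivisors.ne_zero hb
  have hb1 : algebraMap B (FractionRing B) (φ b) ≠ 0 := by
    simpa [map_eq_zero_iff φ hinj] using hb0
  have hb2 : algebraMap R (FractionRing R) b ≠ 0 := by simpa using hb0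
  rw [map_div₀, hψ, hψ, eq_div_iff hb1, ← map_mul] at hc
  have hc' : φ b * c = φ a * 1 := by
    rw [mul_comm, mul_one]; exact IsFractionRing.injective B (FractionRing B) hc
  have h := congrArg ρ hc'
  rw [hρ, hρ, h1, mul_one] at h
  refine ⟨ρ c, ?_⟩
  rw [eq_div_iff hb2, ← map_mul, mul_comm, h]

/-- the value of the retraction on a monomial -/
noncomputable def retrMon {R : Type*} [CommRing R] (m d : ℕ) (x : Fin (m + 1) → R) (y : R)
    (e : Fin (m + 1) →₀ ℕ) : R :=
  open Classical in
  if ∀ i, e i % d = e 0 % d then y ^ (e 0 % d) * ∏ i, x i ^ (e i / d) else 0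

theorem retrMon_x {R : Type*} [CommRing R] (m d : ℕ) (hd : 1 ≤ d) (x : Fin (m + 1) → R) (y : R)
    (e : Fin (m + 1) →₀ ℕ) (j : Fin (m + 1)) :
    retrMon m d x y (Finsupp.single j d + e) = x j * retrMon m d x y e := by
  have hmod : ∀ i, (Finsupp.single j d + e) i % d = e i % d := by
    intro i
    by_cases h : j = i <;> simp [h]
  unfold retrMon
  simp only [hmod]
  split_ifs
  · have : ∀ i, x i ^ ((Finsupp.single j d + e) i / d) =
        (if j = i then x i else 1) * x i ^ (e i / d) := by
      intro i
      by_cases h : j = i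
      · simp [h, Nat.add_div_left _ hd, pow_succ']
      · simp [h]
    simp only [this, Finset.prod_mul_distrib, Finset.prod_ite_eq, Finset.mem_univ, if_true]
    ring
  · simp

theorem retrMon_y {R : Type*} [CommRing R] (m d : ℕ) (hd : 1 ≤ d) (x : Fin (m + 1) → R) (y : R)
    (hxy : y ^ d = ∏ i, x i) (e o : Fin (m + 1) →₀ ℕ) (ho : ∀ i, o i = 1) :
    retrMon m d x y (o + e) = y * retrMon m d x y e := by
  have hiff : (∀ i, (o + e) i % d = (o + e) 0 % d) ↔ (∀ i, e i % d = e 0 % d) := by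
    refine forall_congr' fun i => ?_
    simp only [Finsupp.add_apply, ho]
    exact ⟨fun h => Nat.ModEq.add_left_cancel' 1 h, fun h => Nat.ModEq.add_left 1 h⟩
  unfold retrMon
  simp only [hiff]
  split_ifs with h
  · simp only [Finsupp.add_apply, ho]
    by_cases hr : e 0 % d + 1 = d
    · have hd' : ∀ i, (1 + e i) / d = e i / d + 1 ∧ (1 + e i) % d = 0 := by
        intro i
        have := Nat.div_add_mod (e i) d
        have h2 : 1 + e i = d * (e i / d + 1) := by
          rw [mul_add, mul_one]; have := h i; omega
        rw [h2]
        exact ⟨Nat.mul_div_cancel_left _ hd, Nat.mul_mod_right _ _⟩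
      simp only [hd', pow_succ, Finset.prod_mul_distrib, ← hxy]
      rw [pow_zero, one_mul]
      nth_rewrite 2 [← hr]
      ring
    · have hd' : ∀ i, (1 + e i) / d = e i / d ∧ (1 + e i) % d = e i % d + 1 := by
        intro i
        have h3 := Nat.div_add_mod (e i) d
        have h4 := Nat.mod_lt (e i) hd
        have h5 := h i
        rw [Nat.div_mod_unique hd]
        exact ⟨by omega, by omega⟩
      simp only [hd', pow_succ]
      ring
  · simp

/-- For `n ≥ 1` and `d ≥ 1`, the ring
`R = ℂ[x₁, …, xₙ, y]/(y^d - x₁ x₂ ⋯ xₙ)` is an integral domain which is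
integrally closed in its field of fractions (a normal domain). -/
theorem stmt_2 (n d : ℕ) (hn : 1 ≤ n) (hd : 1 ≤ d) :
    IsDomain (MvPolynomial (Fin (n + 1)) ℂ ⧸
        Ideal.span {(X (Fin.last n) : MvPolynomial (Fin (n + 1)) ℂ) ^ d -
          ∏ i : Fin n, X i.castSucc}) ∧
      IsIntegrallyClosed (MvPolynomial (Fin (n + 1)) ℂ ⧸
        Ideal.span {(X (Fin.last n) : MvPolynomial (Fin (n + 1)) ℂ) ^ d -
          ∏ i : Fin n, X i.castSucc}) := by
  obtain ⟨m, rfl⟩ : ∃ m, n = m + 1 := ⟨n - 1, by omega⟩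
  set I := Ideal.span {(X (Fin.last (m + 1)) : MvPolynomial (Fin (m + 1 + 1)) ℂ) ^ d -
          ∏ i : Fin (m + 1), X i.castSucc} with hI
  let x : Fin (m + 1) → MvPolynomial (Fin (m + 1 + 1)) ℂ ⧸ I :=
    fun i => Ideal.Quotient.mk I (X i.castSucc)
  let y : MvPolynomial (Fin (m + 1 + 1)) ℂ ⧸ I := Ideal.Quotient.mk I (X (Fin.last (m + 1)))
  have hxy : y ^ d = ∏ i, x i := by
    rw [← map_pow, ← map_prod, Ideal.Quotient.eq]
    exact Ideal.subset_span rfl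
  let φ₀ : MvPolynomial (Fin (m + 1 + 1)) ℂ →ₐ[ℂ] MvPolynomial (Fin (m + 1)) ℂ :=
    aeval (Fin.lastCases (∏ i, X i) (fun i => X i ^ d))
  have φx : ∀ i : Fin (m + 1), φ₀ (X i.castSucc) = X i ^ d := fun i => by simp [φ₀]
  have φy : φ₀ (X (Fin.last (m + 1))) = ∏ i, X i := by simp [φ₀]
  have hker : ∀ a ∈ I, φ₀ a = 0 := by
    intro a ha
    have : I ≤ RingHom.ker φ₀ := by
      rw [hI, Ideal.span_le, Set.singleton_subset_iff]
      simp only [SetLike.mem_coe, RingHom.mem_ker, map_sub, map_pow, map_prod, φx, φy]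
      rw [Finset.prod_pow, sub_self]
    exact this ha
  let φ : (MvPolynomial (Fin (m + 1 + 1)) ℂ ⧸ I) →+* MvPolynomial (Fin (m + 1)) ℂ :=
    Ideal.Quotient.lift I φ₀.toRingHom hker
  let ρ : MvPolynomial (Fin (m + 1)) ℂ →ₗ[ℂ] (MvPolynomial (Fin (m + 1 + 1)) ℂ ⧸ I) :=
    (basisMonomials (Fin (m + 1)) ℂ).constr ℂ (retrMon m d x y)
  have hmon : ∀ e, ρ (monomial e 1) = retrMon m d x y e := by
    intro e
    have := (basisMonomials (Fin (m + 1)) ℂ).constr_basis ℂ (retrMon m d x y) e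
    rwa [coe_basisMonomials] at this
  -- it is enough to check multiplicativity on monomials
  have hext : ∀ (o : Fin (m + 1) →₀ ℕ) (z : MvPolynomial (Fin (m + 1 + 1)) ℂ ⧸ I),
      (∀ e, retrMon m d x y (o + e) = z * retrMon m d x y e) →
      ∀ b, ρ (monomial o 1 * b) = z * ρ b := by
    intro o z h b
    have : ρ ∘ₗ LinearMap.mulLeft ℂ (monomial o (1 : ℂ)) = LinearMap.mulLeft ℂ z ∘ₗ ρ := by
      apply (basisMonomials (Fin (m + 1)) ℂ).ext
      intro e
      simp [monomial_mul, hmon, h]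
    exact LinearMap.congr_fun this b
  have hX : ∀ j b, ρ (X j ^ d * b) = x j * ρ b := by
    intro j b
    rw [X_pow_eq_monomial]
    exact hext _ _ (fun e => retrMon_x m d hd x y e j) b
  have hY : ∀ b, ρ ((∏ i, X i) * b) = y * ρ b := by
    intro b
    have : (∏ i, X i : MvPolynomial (Fin (m + 1)) ℂ) =
        monomial (Finsupp.equivFunOnFinite.symm fun _ => 1) 1 := by
      rw [monomial_eq, Finsupp.prod_fintype _ _ (by simp)]
      simp
    rw [this]
    exact hext _ _ (fun e => retrMon_y m d hd x y hxy e _ (by simp)) b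
  refine normal_of_retract φ ρ ?_ ?_
  · have := hmon 0
    simpa [retrMon] using this
  · intro r
    obtain ⟨p, rfl⟩ := Ideal.Quotient.mk_surjective r
    change ∀ b, ρ (φ₀ p * b) = _
    induction p using MvPolynomial.induction_on with
    | C a =>
      intro b
      have h1 : φ₀ (C a) = C a := by simp [φ₀, algebraMap_eq]
      rw [h1, ← smul_eq_C_mul, map_smul]
      obtain ⟨q, hq⟩ := Ideal.Quotient.mk_surjective (ρ b)
      rw [← hq, ← map_mul, ← smul_eq_C_mul]
      rfl
    | add p q hp hq =>
      intro b
      rw [map_add, add_mul, map_add, hp, hq, map_add, add_mul]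
    | mul_X p i hp =>
      intro b
      rw [map_mul φ₀, mul_assoc, hp, map_mul (Ideal.Quotient.mk I), mul_assoc]
      congr 1
      induction i using Fin.lastCases with
      | last => rw [φy, hY]
      | cast i => rw [φx, hX]
end

section
/- Let n ≥ 1 and d ≥ 1 be integers. For each tuple ζ = (ζ_1, …, ζ_n) of complex numbers with ζ_j^d = 1 for all j, let σ_ζ denote the ℂ-algebra automorphism of ℂ[u_1, …, u_n] determined by u_j ↦ ζ_j·u_j. Then a polynomial p ∈ ℂ[u_1, …, u_n] satisfies σ_ζ(p) = p for every such tuple ζ with ζ_1·ζ_2⋯ζ_n = 1 if and only if p lies in the ℂ-subalgebra generated by u_1^d, u_2^d, …, u_n^d and u_1·u_2⋯u_n. Consequently this fixed subalgebra is isomorphic to ℂ[x_1, …, x_n, y]/(y^d − x_1⋯x_n). -/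
open MvPolynomial

lemma aux_mon {n : ℕ} (f : Fin n → ℕ) :
    monomial (Finsupp.equivFunOnFinite.symm f) (1 : ℂ) = ∏ i, (X i : MvPolynomial (Fin n) ℂ) ^ f i := by
  rw [monomial_eq, Finsupp.prod_fintype _ _ (by simp)]
  simp

lemma aux_mon' {n : ℕ} (m : Fin n →₀ ℕ) :
    monomial m (1 : ℂ) = ∏ i, (X i : MvPolynomial (Fin n) ℂ) ^ m i := by
  rw [monomial_eq, Finsupp.prod_fintype _ _ (by simp)]
  simp

lemma aux_coeff {n : ℕ} (ζ : Fin n → ℂ) (p : MvPolynomial (Fin n) ℂ) (m : Fin n →₀ ℕ) :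
    coeff m (aeval (fun j : Fin n => C (ζ j) * X j) p) = (∏ j, ζ j ^ m j) * coeff m p := by
  induction p using MvPolynomial.induction_on' with
  | monomial s c =>
    have : aeval (fun j : Fin n => C (ζ j) * (X j : MvPolynomial (Fin n) ℂ)) (monomial s c)
        = monomial s ((∏ j, ζ j ^ s j) * c) := by
      rw [aeval_monomial, monomial_eq, Finsupp.prod_fintype _ _ (by simp),
        Finsupp.prod_fintype _ _ (by simp)]
      simp only [mul_pow, Finset.prod_mul_distrib, map_mul, map_prod, map_pow, algebraMap_eq]
      ring
    rw [this, coeff_monomial, coeff_monomial]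
    split_ifs with h
    · rw [h]
    · simp
  | add p q hp hq => rw [map_add, coeff_add, coeff_add, hp, hq, mul_add]

lemma aux_cong {n d : ℕ} (hd : 1 ≤ d) (m : Fin n → ℕ)
    (h : ∀ ζ : Fin n → ℂ, (∀ j, ζ j ^ d = 1) → (∏ j, ζ j) = 1 → ∏ j, ζ j ^ m j = 1)
    (a b : Fin n) : m a ≡ m b [MOD d] := by
  by_cases hab : a = b
  · rw [hab]
  have hω := Complex.isPrimitiveRoot_exp d (by omega)
  set ω := Complex.exp (2 * Real.pi * Complex.I / d) with hωd
  have hω0 : ω ≠ 0 := Complex.exp_ne_zero _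
  have key : ∀ k : Fin n → ℕ,
      ∏ j, ((if j = a then ω else 1) * (if j = b then ω⁻¹ else 1) : ℂ) ^ k j = ω ^ k a * (ω⁻¹) ^ k b := by
    intro k
    simp only [mul_pow, Finset.prod_mul_distrib]
    congr 1
    · rw [Finset.prod_eq_single a]
      · simp
      · intro j _ hj; simp [hj]
      · simp
    · rw [Finset.prod_eq_single b]
      · simp
      · intro j _ hj; simp [hj]
      · simp
  have := h (fun j => (if j = a then ω else 1) * (if j = b then ω⁻¹ else 1)) (by
    intro j
    have h1 : ((if j = a then ω else 1) : ℂ) ^ d = 1 := by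
      by_cases hj : j = a
      · subst hj; simp [hω.pow_eq_one]
      · simp [hj]
    have h2 : ((if j = b then ω⁻¹ else 1) : ℂ) ^ d = 1 := by
      by_cases hj : j = b
      · subst hj; simp [hω.pow_eq_one]
      · simp [hj]
    simp only [mul_pow]
    rw [h1, h2, one_mul]) (by
    have := key (fun _ => 1)
    simpa [hω0] using this)
  rw [key, inv_pow, mul_inv_eq_one₀ (pow_ne_zero _ hω0)] at this
  rw [Nat.modEq_iff_dvd, ← hω.zpow_eq_one_iff_dvd, zpow_sub₀ hω0, zpow_natCast, zpow_natCast,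
    this, div_self (pow_ne_zero _ hω0)]

lemma aux_mem {n d : ℕ} (hn : 1 ≤ n) (hd : 1 ≤ d) (m : Fin n →₀ ℕ)
    (h : ∀ a b, m a ≡ m b [MOD d]) :
    monomial m (1 : ℂ) ∈ Algebra.adjoin ℂ
        ((Set.range fun j : Fin n => (X j : MvPolynomial (Fin n) ℂ) ^ d) ∪
          {∏ j : Fin n, (X j : MvPolynomial (Fin n) ℂ)}) := by
  have : Nonempty (Fin n) := ⟨⟨0, hn⟩⟩
  obtain ⟨a, ha⟩ := Finite.exists_min m
  have hq : ∀ j, ∃ q, m j = m a + d * q := by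
    intro j
    obtain ⟨q, hq⟩ := (Nat.modEq_iff_dvd' (ha j)).1 (h a j)
    exact ⟨q, by have := ha j; omega⟩
  choose q hq using hq
  have : monomial m (1 : ℂ) = (∏ j, (X j : MvPolynomial (Fin n) ℂ)) ^ m a *
      ∏ j, ((X j : MvPolynomial (Fin n) ℂ) ^ d) ^ q j := by
    rw [aux_mon', ← Finset.prod_pow, ← Finset.prod_mul_distrib]
    refine Finset.prod_congr rfl fun j _ => ?_
    conv_lhs => rw [hq j]
    rw [pow_add, pow_mul]
  rw [this]
  refine mul_mem (pow_mem ?_ _) (prod_mem fun j _ => pow_mem ?_ _)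
  · exact Algebra.subset_adjoin (Set.mem_union_right _ rfl)
  · exact Algebra.subset_adjoin (Set.mem_union_left _ ⟨j, rfl⟩)

lemma aux_ker {n d : ℕ} (hn : 1 ≤ n) (hd : 1 ≤ d) :
    RingHom.ker (aeval (R := ℂ) (Fin.snoc (α := fun _ => MvPolynomial (Fin n) ℂ)
      (fun j : Fin n => (X j : MvPolynomial (Fin n) ℂ) ^ d)
      (∏ j : Fin n, (X j : MvPolynomial (Fin n) ℂ)))) =
    Ideal.span {(X (Fin.last n) : MvPolynomial (Fin (n + 1)) ℂ) ^ d -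
          ∏ i : Fin n, X i.castSucc} := by
  set φ := aeval (R := ℂ) (Fin.snoc (α := fun _ => MvPolynomial (Fin n) ℂ)
      (fun j : Fin n => (X j : MvPolynomial (Fin n) ℂ) ^ d)
      (∏ j : Fin n, (X j : MvPolynomial (Fin n) ℂ))) with hφ
  set I := Ideal.span {(X (Fin.last n) : MvPolynomial (Fin (n + 1)) ℂ) ^ d -
          ∏ i : Fin n, X i.castSucc} with hI
  have hrel : (Ideal.Quotient.mkₐ ℂ I (X (Fin.last n))) ^ d =
      ∏ i : Fin n, Ideal.Quotient.mkₐ ℂ I (X i.castSucc) := by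
    rw [← map_pow, ← map_prod]
    exact (Ideal.Quotient.mk_eq_mk_iff_sub_mem _ _).2 (Ideal.subset_span rfl)
  apply le_antisymm
  · let b0 : Fin n := ⟨0, hn⟩
    let ψ : MvPolynomial (Fin n) ℂ →ₗ[ℂ] (MvPolynomial (Fin (n + 1)) ℂ ⧸ I) :=
      (basisMonomials (Fin n) ℂ).constr ℂ fun m =>
        (∏ i : Fin n, Ideal.Quotient.mkₐ ℂ I (X i.castSucc) ^ ((m i - m b0 % d) / d)) *
          Ideal.Quotient.mkₐ ℂ I (X (Fin.last n)) ^ (m b0 % d)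
    have hψ : ∀ m : Fin n →₀ ℕ, ψ (monomial m 1) =
        (∏ i : Fin n, Ideal.Quotient.mkₐ ℂ I (X i.castSucc) ^ ((m i - m b0 % d) / d)) *
          Ideal.Quotient.mkₐ ℂ I (X (Fin.last n)) ^ (m b0 % d) := by
      intro m
      have := (basisMonomials (Fin n) ℂ).constr_basis ℂ (fun m =>
        (∏ i : Fin n, Ideal.Quotient.mkₐ ℂ I (X i.castSucc) ^ ((m i - m b0 % d) / d)) *
          Ideal.Quotient.mkₐ ℂ I (X (Fin.last n)) ^ (m b0 % d)) m
      rwa [coe_basisMonomials] at this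
    have hcomp : ψ ∘ₗ φ.toLinearMap = (Ideal.Quotient.mkₐ ℂ I).toLinearMap := by
      refine (basisMonomials (Fin (n+1)) ℂ).ext fun s => ?_
      rw [coe_basisMonomials]
      simp only [LinearMap.comp_apply, AlgHom.toLinearMap_apply]
      have h1 : φ (monomial s 1) = monomial (Finsupp.equivFunOnFinite.symm
          fun i : Fin n => d * s i.castSucc + s (Fin.last n)) 1 := by
        rw [aux_mon, aux_mon', map_prod, Fin.prod_univ_castSucc]
        simp only [map_pow, hφ, aeval_X, Fin.snoc_castSucc, Fin.snoc_last]
        rw [← Finset.prod_pow, ← Finset.prod_mul_distrib]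
        refine Finset.prod_congr rfl fun j _ => ?_
        rw [pow_add, pow_mul]
      rw [h1, hψ, aux_mon', map_prod, Fin.prod_univ_castSucc]
      simp only [Finsupp.equivFunOnFinite_symm_apply_apply, map_pow, Nat.mul_add_mod]
      have h2 : ∀ i : Fin n, (d * s i.castSucc + s (Fin.last n) - s (Fin.last n) % d) / d
          = s i.castSucc + s (Fin.last n) / d := by
        intro i
        apply Nat.div_eq_of_eq_mul_right hd
        have := Nat.div_add_mod (s (Fin.last n)) d
        rw [mul_add]
        omega
      simp only [h2, pow_add, Finset.prod_mul_distrib]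
      rw [Finset.prod_pow, ← hrel, ← pow_mul, mul_assoc, ← pow_add, Nat.div_add_mod]
    intro p hp
    have h0 : φ p = 0 := hp
    have := LinearMap.congr_fun hcomp p
    simp only [LinearMap.comp_apply, AlgHom.toLinearMap_apply, h0, map_zero] at this
    exact Ideal.Quotient.eq_zero_iff_mem.1 this.symm
  · rw [hI, Ideal.span_le, Set.singleton_subset_iff]
    change φ _ = 0
    simp [hφ, Finset.prod_pow]

/-- For `n ≥ 1`, `d ≥ 1`, a polynomial `p ∈ ℂ[u₁, …, uₙ]` is fixed
by every rescaling automorphism `uⱼ ↦ ζⱼ uⱼ` with `ζⱼ^d = 1` and `ζ₁ ⋯ ζₙ = 1`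
if and only if `p` lies in the `ℂ`-subalgebra generated by
`u₁^d, …, uₙ^d` and `u₁ u₂ ⋯ uₙ`.  Consequently this fixed subalgebra is
isomorphic to `ℂ[x₁, …, xₙ, y]/(y^d - x₁ ⋯ xₙ)`. -/
theorem stmt_3 (n d : ℕ) (hn : 1 ≤ n) (hd : 1 ≤ d) :
    (∀ p : MvPolynomial (Fin n) ℂ,
      (∀ ζ : Fin n → ℂ, (∀ j, ζ j ^ d = 1) → (∏ j, ζ j) = 1 →
        MvPolynomial.aeval (fun j : Fin n => C (ζ j) * X j) p = p) ↔
      p ∈ Algebra.adjoin ℂ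
        ((Set.range fun j : Fin n => (X j : MvPolynomial (Fin n) ℂ) ^ d) ∪
          {∏ j : Fin n, (X j : MvPolynomial (Fin n) ℂ)})) ∧
    Nonempty ((Algebra.adjoin ℂ
        ((Set.range fun j : Fin n => (X j : MvPolynomial (Fin n) ℂ) ^ d) ∪
          {∏ j : Fin n, (X j : MvPolynomial (Fin n) ℂ)})) ≃ₐ[ℂ]
      (MvPolynomial (Fin (n + 1)) ℂ ⧸
        Ideal.span {(X (Fin.last n) : MvPolynomial (Fin (n + 1)) ℂ) ^ d -
          ∏ i : Fin n, X i.castSucc})) := by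
  refine ⟨fun p => ⟨fun h => ?_, fun hp ζ hζ h1 => ?_⟩, ?_⟩
  · rw [p.as_sum]
    refine sum_mem fun m hm => ?_
    have hm' : coeff m p ≠ 0 := mem_support_iff.1 hm
    have : monomial m (coeff m p) = coeff m p • monomial m (1 : ℂ) := by
      simp [smul_monomial]
    rw [this]
    refine Subalgebra.smul_mem _ (aux_mem hn hd m (aux_cong hd m fun ζ hζ h1 => ?_)) _
    have h2 := aux_coeff ζ p m
    rw [h ζ hζ h1] at h2
    exact (mul_eq_right₀ hm').1 h2.symm
  · have : Algebra.adjoin ℂ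
        ((Set.range fun j : Fin n => (X j : MvPolynomial (Fin n) ℂ) ^ d) ∪
          {∏ j : Fin n, (X j : MvPolynomial (Fin n) ℂ)}) ≤
        AlgHom.equalizer (aeval (fun j : Fin n => C (ζ j) * (X j : MvPolynomial (Fin n) ℂ)))
          (AlgHom.id ℂ _) := by
      refine Algebra.adjoin_le ?_
      rintro x (⟨j, rfl⟩ | rfl)
      · rw [SetLike.mem_coe, AlgHom.mem_equalizer, AlgHom.id_apply]
        simp only
        rw [map_pow, aeval_X, mul_pow, ← C_pow, hζ, C_1, one_mul]
      · rw [SetLike.mem_coe, AlgHom.mem_equalizer, AlgHom.id_apply, map_prod]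
        simp only [aeval_X]
        rw [Finset.prod_mul_distrib, ← map_prod C, h1, C_1, one_mul]
    exact this hp
  · have hr : Set.range (Fin.snoc (α := fun _ => MvPolynomial (Fin n) ℂ)
      (fun j : Fin n => (X j : MvPolynomial (Fin n) ℂ) ^ d)
      (∏ j : Fin n, (X j : MvPolynomial (Fin n) ℂ))) =
        ((Set.range fun j : Fin n => (X j : MvPolynomial (Fin n) ℂ) ^ d) ∪
          {∏ j : Fin n, (X j : MvPolynomial (Fin n) ℂ)}) := by
      ext x
      simp [Fin.exists_fin_succ', or_comm, eq_comm]
    rw [← hr, Algebra.adjoin_range_eq_range_aeval, ← aux_ker hn hd]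
    exact ⟨(Ideal.quotientKerEquivRange _).symm⟩
end

section
/- For every integer d ≥ 1 the following identity holds in the polynomial ring ℤ[y, z]: ∑_{i=1}^{d−1} (1 − z)^{i−1}·(1 + yz)^{d−1−i} = ∑_{n=0}^{d−2} C(d−1, n+1)·(∑_{j=0}^{n} (−1)^{n−j} y^j)·z^n, where C(d−1, n+1) denotes the binomial coefficient. -/
open MvPolynomial

/-- For every `d ≥ 1`, in `ℤ[y, z]` (with `y = X 0`, `z = X 1`):
`∑_{i=1}^{d-1} (1-z)^{i-1} (1+yz)^{d-1-i}
  = ∑_{n=0}^{d-2} C(d-1, n+1) (∑_{j=0}^{n} (-1)^{n-j} y^j) z^n`. -/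
theorem stmt_4 (d : ℕ) (hd : 1 ≤ d) :
    ∑ i ∈ Finset.Icc 1 (d - 1),
        (1 - (X 1 : MvPolynomial (Fin 2) ℤ)) ^ (i - 1) *
          (1 + X 0 * X 1) ^ (d - 1 - i) =
      ∑ n ∈ Finset.range (d - 1),
        ((d - 1).choose (n + 1) : MvPolynomial (Fin 2) ℤ) *
          (∑ j ∈ Finset.range (n + 1), (-1) ^ (n - j) * (X 0 : MvPolynomial (Fin 2) ℤ) ^ j) *
          X 1 ^ n := by
  obtain ⟨m, rfl⟩ : ∃ m, d = m + 1 := ⟨d - 1, by omega⟩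
  simp only [Nat.add_sub_cancel]
  have hne : ((X 0 : MvPolynomial (Fin 2) ℤ) + 1) * X 1 ≠ 0 := by
    intro h
    have h2 := congrArg (MvPolynomial.eval (fun _ => (1 : ℤ))) h
    simp at h2
  apply mul_right_cancel₀ hne
  generalize (X 0 : MvPolynomial (Fin 2) ℤ) = y
  generalize (X 1 : MvPolynomial (Fin 2) ℤ) = z
  have hL : ∑ i ∈ Finset.Icc 1 m, (1 - z) ^ (i - 1) * (1 + y * z) ^ (m - i)
      = ∑ i ∈ Finset.range m, (1 - z) ^ i * (1 + y * z) ^ (m - 1 - i) := by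
    rw [Finset.range_eq_Ico, ← Finset.Ico_add_one_right_eq_Icc, Finset.sum_Ico_eq_sum_range,
      Finset.sum_Ico_eq_sum_range]
    refine Finset.sum_congr (by simp) fun i _ => ?_
    congr 2 <;> omega
  have hS : ∀ n : ℕ, (∑ j ∈ Finset.range (n + 1), (-1) ^ (n - j) * y ^ j) * (y + 1)
      = y ^ (n + 1) - (-1) ^ (n + 1) := by
    intro n
    rw [← geom_sum₂_mul y (-1) (n + 1), sub_neg_eq_add]
    congr 1
    refine Finset.sum_congr rfl fun i _ => ?_
    rw [mul_comm, Nat.add_sub_cancel]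
  have hb : ∀ t : MvPolynomial (Fin 2) ℤ, (1 + t) ^ m
      = ∑ n ∈ Finset.range m, (m.choose (n + 1) : MvPolynomial (Fin 2) ℤ) * t ^ (n + 1) + 1 := by
    intro t
    rw [add_comm 1 t, add_pow, Finset.sum_range_succ']
    simp [mul_comm]
  have hg := geom_sum₂_mul (1 - z) (1 + y * z) m
  rw [hL]
  have h1 : (∑ i ∈ Finset.range m, (1 - z) ^ i * (1 + y * z) ^ (m - 1 - i)) * ((y + 1) * z)
      = (1 + y * z) ^ m - (1 + -z) ^ m := by
    rw [← sub_eq_add_neg]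
    linear_combination -hg
  rw [h1, hb, hb, add_sub_add_right_eq_sub, ← Finset.sum_sub_distrib, Finset.sum_mul]
  refine Finset.sum_congr rfl fun n _ => ?_
  rw [mul_pow, neg_pow z]
  linear_combination -(m.choose (n + 1) : MvPolynomial (Fin 2) ℤ) * z ^ (n + 1) * hS n
end

section
/- Let d ≥ 1 be an integer, let V be a finite-dimensional vector space over ℚ, and let g be a ℚ-linear automorphism of V with g^d = id. Let ζ ∈ ℂ be a primitive d-th root of unity, and let m be the ℂ-dimension of the ζ-eigenspace of the complexification g_ℂ acting on ℂ ⊗_ℚ V. Suppose W ⊆ V is a ℚ-subspace with g(W) = W such that ℂ ⊗_ℚ W (viewed inside ℂ ⊗_ℚ V) contains no nonzero ζ-eigenvector of g_ℂ. Then dim_ℚ W ≤ dim_ℚ V − φ(d)·m, where φ is Euler's totient function. -/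
open TensorProduct

open Polynomial in
lemma aux_poly (d : ℕ) (hd : 1 ≤ d) (ζ : ℂ) (hζ : IsPrimitiveRoot ζ d) (n : ℕ) :
    ∀ p : ℚ[X], p ≠ 0 → p.natDegree ≤ n →
      Nat.totient d * rootMultiplicity ζ (p.map (algebraMap ℚ ℂ)) ≤ p.natDegree := by
  induction n using Nat.strong_induction_on with
  | _ n ih =>
    intro p hp hn
    by_cases hr : IsRoot (p.map (algebraMap ℚ ℂ)) ζ
    · have hdvd : cyclotomic d ℚ ∣ p := by
        rw [cyclotomic_eq_minpoly_rat hζ hd]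
        apply minpoly.dvd
        rw [IsRoot.def, eval_map_algebraMap] at hr
        exact hr
      obtain ⟨q, rfl⟩ := hdvd
      have hq : q ≠ 0 := right_ne_zero_of_mul hp
      have hdeg : (cyclotomic d ℚ * q).natDegree = Nat.totient d + q.natDegree := by
        rw [natDegree_mul (cyclotomic_ne_zero d ℚ) hq, natDegree_cyclotomic]
      have hpos : 0 < Nat.totient d := Nat.totient_pos.2 hd
      have h1 := ih q.natDegree (by omega) q hq le_rfl
      have hsep : (cyclotomic d ℂ).Separable := by
        have := (cyclotomic.irreducible_rat hd).separable
        have h := this.map (f := algebraMap ℚ ℂ)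
        rwa [map_cyclotomic] at h
      have h2 := rootMultiplicity_le_one_of_separable hsep ζ
      have h3 : (cyclotomic d ℂ) * q.map (algebraMap ℚ ℂ) ≠ 0 :=
        mul_ne_zero (cyclotomic_ne_zero d ℂ) (Polynomial.map_ne_zero hq)
      rw [hdeg, Polynomial.map_mul, map_cyclotomic, rootMultiplicity_mul h3]
      nlinarith
    · simp [rootMultiplicity_eq_zero hr]

lemma aux_end (d : ℕ) (hd : 1 ≤ d) (ζ : ℂ) (hζ : IsPrimitiveRoot ζ d)
    (U : Type*) [AddCommGroup U] [Module ℚ U] [FiniteDimensional ℚ U] (f : Module.End ℚ U) :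
    Nat.totient d * Module.finrank ℂ (Module.End.eigenspace (LinearMap.baseChange ℂ f) ζ)
      ≤ Module.finrank ℚ U := by
  have h1 := LinearMap.finrank_eigenspace_le (LinearMap.baseChange ℂ f) ζ
  rw [LinearMap.charpoly_baseChange] at h1
  have h2 := aux_poly d hd ζ hζ _ f.charpoly f.charpoly_monic.ne_zero le_rfl
  rw [LinearMap.charpoly_natDegree] at h2
  exact (Nat.mul_le_mul_left _ h1).trans h2

/-- If `g` is a `ℚ`-linear automorphism of a finite-dimensional
`ℚ`-vector space `V` with `g^d = 1`, `ζ` a primitive `d`-th root of unity, `m`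
the complex dimension of the `ζ`-eigenspace of the complexification of `g`, and
`W ⊆ V` a `g`-invariant `ℚ`-subspace whose complexification contains no nonzero
`ζ`-eigenvector of `g_ℂ`, then `dim_ℚ W ≤ dim_ℚ V − φ(d) · m`. -/
theorem stmt_6 (d : ℕ) (hd : 1 ≤ d) (V : Type*) [AddCommGroup V] [Module ℚ V]
    [FiniteDimensional ℚ V] (g : Module.End ℚ V) (hg : g ^ d = 1)
    (ζ : ℂ) (hζ : IsPrimitiveRoot ζ d)
    (W : Submodule ℚ V) (hW : W.map g = W)
    (hmiss : LinearMap.range (LinearMap.baseChange ℂ W.subtype) ⊓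
        Module.End.eigenspace (LinearMap.baseChange ℂ g) ζ = ⊥) :
    (Module.finrank ℚ W : ℤ) ≤ (Module.finrank ℚ V : ℤ) -
      (Nat.totient d : ℤ) *
        (Module.finrank ℂ (Module.End.eigenspace (LinearMap.baseChange ℂ g) ζ) : ℤ) := by
  have hle : W ≤ W.comap g := Submodule.map_le_iff_le_comap.1 hW.le
  have h1 := aux_end d hd ζ hζ (V ⧸ W) (W.mapQ W g hle)
  have hcomm : ∀ x, LinearMap.baseChange ℂ (W.mapQ W g hle) (LinearMap.baseChange ℂ W.mkQ x)
      = LinearMap.baseChange ℂ W.mkQ (LinearMap.baseChange ℂ g x) := by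
    intro x
    rw [← LinearMap.comp_apply, ← LinearMap.comp_apply, ← LinearMap.baseChange_comp,
      ← LinearMap.baseChange_comp, Submodule.mapQ_mkQ]
  have hmap : ∀ x ∈ Module.End.eigenspace (LinearMap.baseChange ℂ g) ζ,
      LinearMap.baseChange ℂ W.mkQ x ∈
        Module.End.eigenspace (LinearMap.baseChange ℂ (W.mapQ W g hle)) ζ := by
    intro x hx
    rw [Module.End.mem_eigenspace_iff] at hx ⊢
    rw [hcomm, hx, map_smul]
  have h2 : Module.finrank ℂ (Module.End.eigenspace (LinearMap.baseChange ℂ g) ζ) ≤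
      Module.finrank ℂ
        (Module.End.eigenspace (LinearMap.baseChange ℂ (W.mapQ W g hle)) ζ) := by
    apply LinearMap.finrank_le_finrank_of_injective
      (f := (LinearMap.baseChange ℂ W.mkQ).restrict hmap)
    rw [← LinearMap.ker_eq_bot, LinearMap.ker_eq_bot']
    rintro ⟨x, hx⟩ h0
    have h0' : LinearMap.baseChange ℂ W.mkQ x = 0 := congrArg Subtype.val h0
    have hex := lTensor_exact ℂ (LinearMap.exact_subtype_mkQ W) (Submodule.mkQ_surjective W)
    obtain ⟨y, hy⟩ := (hex x).1 h0'
    have : x ∈ LinearMap.range (LinearMap.baseChange ℂ W.subtype) ⊓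
        Module.End.eigenspace (LinearMap.baseChange ℂ g) ζ := ⟨⟨y, hy⟩, hx⟩
    rw [hmiss, Submodule.mem_bot] at this
    exact Subtype.ext this
  have h3 := W.finrank_quotient_add_finrank
  have h4 := (Nat.mul_le_mul_left (Nat.totient d) h2).trans h1
  zify at h3 h4
  linarith
end
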